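/- The set Γ_s^(2) is a subgroup of U(2,1;J): it contains the identity matrix, and it is closed under matrix multiplication and under matrix inversion. -/

import Mathlib

noncomputable section

open Matrix

/-- The Hermitian form matrix `J`. -/
def matJ : Matrix (Fin 3) (Fin 3) ℂ := !![0,0,1; 0,1,0; 1,0,0]

/-- Membership in `U(2,1;J)`. -/
def inU21 (M : Matrix (Fin 3) (Fin 3) ℂ) : Prop := IsUnit M ∧ Mᴴ * matJ * M = matJ

/-- `i√2`. -/
def isq2 : ℂ := Complex.I * (Real.sqrt 2 : ℂ)

/-- Membership in the ring of integers `O₂ = ℤ + ℤ·i√2`. -/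
def inO2 (z : ℂ) : Prop := ∃ a b : ℤ, z = (a : ℂ) + (b : ℂ) * isq2

/-- The sister group `Γ_s^(2)`. -/
def GammaS2 (M : Matrix (Fin 3) (Fin 3) ℂ) : Prop :=
  inU21 M ∧ inO2 (M 0 0) ∧ inO2 (M 0 1) ∧ inO2 (M 1 1) ∧ inO2 (M 1 2) ∧
    inO2 (M 2 2) ∧ inO2 (isq2 * M 0 2) ∧ inO2 (M 1 0 / isq2) ∧
    inO2 (M 2 0 / isq2) ∧ inO2 (M 2 1 / isq2)

lemma isq2_sq : isq2 * isq2 = -2 := by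
  have h : ((Real.sqrt 2 : ℝ) : ℂ) * ((Real.sqrt 2 : ℝ) : ℂ) = 2 := by
    rw [← Complex.ofReal_mul, Real.mul_self_sqrt (by norm_num)]
    norm_num
  unfold isq2
  linear_combination (Complex.I * Complex.I) * h + 2 * Complex.I_mul_I

lemma isq2_ne : isq2 ≠ 0 := by
  intro h
  have := isq2_sq
  rw [h] at this
  norm_num at this

lemma isq2_conj : star isq2 = -isq2 := by
  simp [isq2]

lemma inO2_add {x y : ℂ} (hx : inO2 x) (hy : inO2 y) : inO2 (x + y) := by
  obtain ⟨a, b, rfl⟩ := hx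
  obtain ⟨c, d, rfl⟩ := hy
  exact ⟨a + c, b + d, by push_cast; ring⟩

lemma inO2_mul {x y : ℂ} (hx : inO2 x) (hy : inO2 y) : inO2 (x * y) := by
  obtain ⟨a, b, rfl⟩ := hx
  obtain ⟨c, d, rfl⟩ := hy
  refine ⟨a * c - 2 * b * d, a * d + b * c, ?_⟩
  push_cast
  linear_combination (b * d : ℂ) * isq2_sq

lemma inO2_neg {x : ℂ} (hx : inO2 x) : inO2 (-x) := by
  obtain ⟨a, b, rfl⟩ := hx
  exact ⟨-a, -b, by push_cast; ring⟩

lemma inO2_star {x : ℂ} (hx : inO2 x) : inO2 (star x) := by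
  obtain ⟨a, b, rfl⟩ := hx
  refine ⟨a, -b, ?_⟩
  rw [star_add, star_mul, isq2_conj]
  simp [mul_comm]

lemma inO2_isq2 : inO2 isq2 := ⟨0, 1, by simp⟩
lemma inO2_zero : inO2 0 := ⟨0, 0, by simp⟩
lemma inO2_one : inO2 1 := ⟨1, 0, by simp⟩

lemma matJ_sq : matJ * matJ = 1 := by
  ext i j
  fin_cases i <;> fin_cases j <;> simp [matJ, Matrix.mul_apply, Fin.sum_univ_three]

lemma inU21_mul {M N : Matrix (Fin 3) (Fin 3) ℂ} (hM : inU21 M) (hN : inU21 N) :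
    inU21 (M * N) := by
  refine ⟨hM.1.mul hN.1, ?_⟩
  calc (M * N)ᴴ * matJ * (M * N) = Nᴴ * (Mᴴ * matJ * M) * N := by
        rw [Matrix.conjTranspose_mul]; simp only [Matrix.mul_assoc]
    _ = matJ := by rw [hM.2, hN.2]

lemma inv_eq_of_inU21 {M : Matrix (Fin 3) (Fin 3) ℂ} (hM : inU21 M) :
    M⁻¹ = matJ * Mᴴ * matJ := by
  apply Matrix.inv_eq_left_inv
  calc matJ * Mᴴ * matJ * M = matJ * (Mᴴ * matJ * M) := by simp only [Matrix.mul_assoc]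
    _ = 1 := by rw [hM.2, matJ_sq]

lemma inU21_inv {M : Matrix (Fin 3) (Fin 3) ℂ} (hM : inU21 M) : inU21 M⁻¹ := by
  have hd : IsUnit M.det := (Matrix.isUnit_iff_isUnit_det M).1 hM.1
  have h1 : M * M⁻¹ = 1 := Matrix.mul_nonsing_inv M hd
  have h2 : (M⁻¹)ᴴ * Mᴴ = 1 := by
    rw [← Matrix.conjTranspose_mul, h1, Matrix.conjTranspose_one]
  refine ⟨IsUnit.of_mul_eq_one M (Matrix.nonsing_inv_mul M hd), ?_⟩
  calc (M⁻¹)ᴴ * matJ * M⁻¹ = (M⁻¹)ᴴ * (Mᴴ * matJ * M) * M⁻¹ := by rw [hM.2]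
    _ = ((M⁻¹)ᴴ * Mᴴ) * matJ * (M * M⁻¹) := by simp only [Matrix.mul_assoc]
    _ = matJ := by rw [h1, h2, Matrix.one_mul, Matrix.mul_one]

lemma inv_apply_of_inU21 {M : Matrix (Fin 3) (Fin 3) ℂ} (hM : inU21 M) (i j : Fin 3) :
    M⁻¹ i j = star (M (Fin.rev j) (Fin.rev i)) := by
  rw [inv_eq_of_inU21 hM]
  fin_cases i <;> fin_cases j <;>
    simp [matJ, Matrix.mul_apply, Fin.sum_univ_three, Fin.rev, Matrix.vecMul, dotProduct]

lemma inO2_star_div {x : ℂ} (hx : inO2 (x / isq2)) : inO2 (star x / isq2) := by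
  have h := inO2_neg (inO2_star hx)
  rwa [star_div₀, isq2_conj, div_neg, neg_neg] at h

lemma inO2_star_mul {x : ℂ} (hx : inO2 (isq2 * x)) : inO2 (isq2 * star x) := by
  have h := inO2_neg (inO2_star hx)
  rwa [star_mul, isq2_conj, mul_neg, neg_neg, mul_comm] at h

/-- `Γ_s^(2)` is a subgroup of `U(2,1;J)`: it contains the identity and is closed
under matrix multiplication and matrix inversion. -/
theorem gammaS2_subgroup :
    GammaS2 1 ∧
    (∀ M N : Matrix (Fin 3) (Fin 3) ℂ, GammaS2 M → GammaS2 N → GammaS2 (M * N)) ∧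
    (∀ M : Matrix (Fin 3) (Fin 3) ℂ, GammaS2 M → GammaS2 M⁻¹) := by
  have hs := isq2_ne
  have S := inO2_isq2
  refine ⟨?_, ?_, ?_⟩
  · refine ⟨⟨isUnit_one, by simp⟩, ?_⟩
    simp [inO2_zero, inO2_one]
  · rintro M N ⟨hM, a00, a01, a11, a12, a22, a02, a10, a20, a21⟩
      ⟨hN, b00, b01, b11, b12, b22, b02, b10, b20, b21⟩
    refine ⟨inU21_mul hM hN, ?_⟩
    simp only [Matrix.mul_apply, Fin.sum_univ_three]
    refine ⟨?_, ?_, ?_, ?_, ?_, ?_, ?_, ?_, ?_⟩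
    · convert inO2_add (inO2_add (inO2_mul a00 b00) (inO2_mul (inO2_mul S a01) b10))
        (inO2_mul a02 b20) using 1
      field_simp
    · convert inO2_add (inO2_add (inO2_mul a00 b01) (inO2_mul a01 b11))
        (inO2_mul a02 b21) using 1
      field_simp
    · convert inO2_add (inO2_add (inO2_mul (inO2_mul S a10) b01) (inO2_mul a11 b11))
        (inO2_mul (inO2_mul S a12) b21) using 1
      field_simp
    · convert inO2_add (inO2_add (inO2_mul a10 b02) (inO2_mul a11 b12))
        (inO2_mul a12 b22) using 1
      field_simp
    · convert inO2_add (inO2_add (inO2_mul a20 b02) (inO2_mul (inO2_mul S a21) b12))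
        (inO2_mul a22 b22) using 1
      field_simp
    · convert inO2_add (inO2_add (inO2_mul a00 b02) (inO2_mul (inO2_mul S a01) b12))
        (inO2_mul a02 b22) using 1
      ring
    · convert inO2_add (inO2_add (inO2_mul a10 b00) (inO2_mul a11 b10))
        (inO2_mul a12 b20) using 1
      ring
    · convert inO2_add (inO2_add (inO2_mul a20 b00) (inO2_mul (inO2_mul S a21) b10))
        (inO2_mul a22 b20) using 1
      field_simp
    · convert inO2_add (inO2_add (inO2_mul a20 b01) (inO2_mul a21 b11))
        (inO2_mul a22 b21) using 1
      ring
  · rintro M ⟨hM, a00, a01, a11, a12, a22, a02, a10, a20, a21⟩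
    refine ⟨inU21_inv hM, ?_⟩
    simp only [inv_apply_of_inU21 hM]
    exact ⟨inO2_star a22, inO2_star a12, inO2_star a11, inO2_star a01, inO2_star a00,
      inO2_star_mul a02, inO2_star_div a21, inO2_star_div a20, inO2_star_div a10⟩
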